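/- arXiv:2210.14437 — 13 statements merged into one kernel-verified Lean document; each statement's English description precedes it below -/
import Mathlib

section
/- Let u : (Fin K → ℝ) → ℝ be a utility function, let p ∈ ℝ^K with p_k > 0 for all k, let m > 0, λ > 0, and let x̄ ≥ 0 be such that x̄ maximizes the map x ↦ u(x) − λ·⟨p,x⟩ over the nonnegative orthant and ⟨p,x̄⟩ = m. Then the indirect utility v(p,m) := sup { u(x) : x ≥ 0, ⟨p,x⟩ ≤ m } satisfies v(p,m) = λ·m + v̄(λ·p), where v̄ is the Fenchel dual of u. (Lemma 1, equation (4).) -/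
noncomputable section

/-- Inner product on `ℝ^K`. -/
def dot {K : ℕ} (p x : Fin K → ℝ) : ℝ := ∑ k, p k * x k

/-- A utility function: continuous, strictly increasing and strictly concave
on the nonnegative orthant. -/
structure IsUtility {K : ℕ} (u : (Fin K → ℝ) → ℝ) : Prop where
  continuousOn : ContinuousOn u {x : Fin K → ℝ | ∀ k, 0 ≤ x k}
  strictMono : ∀ x y : Fin K → ℝ, (∀ k, 0 ≤ x k) → (∀ k, 0 ≤ y k) →
    (∀ k, x k ≤ y k) → x ≠ y → u x < u y
  strictConcaveOn : StrictConcaveOn ℝ {x : Fin K → ℝ | ∀ k, 0 ≤ x k} u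

/-- The Fenchel dual `v̄(q) = sup { u(x) − ⟨q,x⟩ : x ≥ 0 }`. -/
def fenchelDual {K : ℕ} (u : (Fin K → ℝ) → ℝ) (q : Fin K → ℝ) : ℝ :=
  sSup ((fun x => u x - dot q x) '' {x : Fin K → ℝ | ∀ k, 0 ≤ x k})

/-- The indirect utility `v(p,m) = sup { u(x) : x ≥ 0, ⟨p,x⟩ ≤ m }`. -/
def indirectUtility {K : ℕ} (u : (Fin K → ℝ) → ℝ) (p : Fin K → ℝ) (m : ℝ) : ℝ :=
  sSup (u '' {x : Fin K → ℝ | (∀ k, 0 ≤ x k) ∧ dot p x ≤ m})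

/-- Lemma 1, equation (4): `v(p,m) = λ·m + v̄(λ·p)`. -/
theorem indirect_utility_eq_fenchel {K : ℕ} (u : (Fin K → ℝ) → ℝ) (hu : IsUtility u)
    (p : Fin K → ℝ) (hp : ∀ k, 0 < p k) (m lam : ℝ) (hm : 0 < m) (hlam : 0 < lam)
    (xbar : Fin K → ℝ) (hxbar : ∀ k, 0 ≤ xbar k)
    (hmax : ∀ x : Fin K → ℝ, (∀ k, 0 ≤ x k) →
      u x - lam * dot p x ≤ u xbar - lam * dot p xbar)
    (hbudget : dot p xbar = m) :
    indirectUtility u p m = lam * m + fenchelDual u (fun k => lam * p k) := by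
  have hd : ∀ x : Fin K → ℝ, dot (fun k => lam * p k) x = lam * dot p x := by
    intro x
    simp only [dot, Finset.mul_sum, mul_assoc]
  have h1 : IsGreatest (u '' {x : Fin K → ℝ | (∀ k, 0 ≤ x k) ∧ dot p x ≤ m}) (u xbar) := by
    refine ⟨⟨xbar, ⟨hxbar, hbudget.le⟩, rfl⟩, ?_⟩
    rintro _ ⟨x, ⟨hx, hxm⟩, rfl⟩
    have h := hmax x hx
    have h2 := mul_le_mul_of_nonneg_left hxm hlam.le
    rw [hbudget] at h
    linarith
  have h2 : IsGreatest ((fun x => u x - dot (fun k => lam * p k) x) ''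
      {x : Fin K → ℝ | ∀ k, 0 ≤ x k}) (u xbar - lam * m) := by
    refine ⟨⟨xbar, hxbar, by simp only [hd, hbudget]⟩, ?_⟩
    rintro _ ⟨x, hx, rfl⟩
    have h := hmax x hx
    rw [hbudget] at h
    simpa only [hd] using h
  rw [indirectUtility, fenchelDual, h1.csSup_eq, h2.csSup_eq]
  ring
end
end

section
/- Let u : (Fin K → ℝ) → ℝ be a utility function and p ∈ ℝ^K with p_k > 0 for all k. Suppose that for each m in an open interval I ⊆ (0,∞) there exist λ(m) > 0 and x̄(m) ≥ 0 such that x̄(m) maximizes x ↦ u(x) − λ(m)·⟨p,x⟩ over the nonnegative orthant and ⟨p,x̄(m)⟩ = m. Define v(m) := sup { u(x) : x ≥ 0, ⟨p,x⟩ ≤ m }. Then: (i) for all m, m' ∈ I, v(m') ≤ v(m) + λ(m)·(m' − m), i.e. λ(m) is a supergradient of the concave function v at m; and (ii) if λ is continuous at a point m₀ ∈ I, then v has derivative λ(m₀) at m₀. In particular the Lagrange multiplier equals the marginal utility of income. (Lemma 1: λ_i(p,m_i) = ∂v_i(p,m_i)/∂m_i.) -/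
noncomputable section

/-- Lemma 1: the Lagrange multiplier `λ(m)` is a supergradient of the indirect
utility `v(p,·)` at `m`, and if `λ` is continuous at `m₀` then `v(p,·)` is
differentiable at `m₀` with derivative `λ(m₀)` (the marginal utility of income). -/
theorem multiplier_is_marginal_utility_of_income {K : ℕ}
    (u : (Fin K → ℝ) → ℝ) (hu : IsUtility u)
    (p : Fin K → ℝ) (hp : ∀ k, 0 < p k)
    (a b : ℝ) (ha : 0 ≤ a)
    (lam : ℝ → ℝ) (xbar : ℝ → Fin K → ℝ)
    (hlam : ∀ m ∈ Set.Ioo a b, 0 < lam m)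
    (hxnn : ∀ m ∈ Set.Ioo a b, ∀ k, 0 ≤ xbar m k)
    (hmax : ∀ m ∈ Set.Ioo a b, ∀ x : Fin K → ℝ, (∀ k, 0 ≤ x k) →
      u x - lam m * dot p x ≤ u (xbar m) - lam m * dot p (xbar m))
    (hbud : ∀ m ∈ Set.Ioo a b, dot p (xbar m) = m)
    (v : ℝ → ℝ)
    (hv : ∀ m, v m = sSup (u '' {x : Fin K → ℝ | (∀ k, 0 ≤ x k) ∧ dot p x ≤ m})) :
    (∀ m ∈ Set.Ioo a b, ∀ m' ∈ Set.Ioo a b, v m' ≤ v m + lam m * (m' - m)) ∧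
    (∀ m₀ ∈ Set.Ioo a b, ContinuousAt lam m₀ → HasDerivAt v (lam m₀) m₀) := by
  have hvx : ∀ m ∈ Set.Ioo a b, v m = u (xbar m) := by
    intro m hm
    rw [hv]
    apply IsGreatest.csSup_eq
    refine ⟨⟨xbar m, ⟨hxnn m hm, (hbud m hm).le⟩, rfl⟩, ?_⟩
    rintro _ ⟨x, ⟨hx, hxm⟩, rfl⟩
    have h1 := hmax m hm x hx
    rw [hbud m hm] at h1
    have h2 := mul_le_mul_of_nonneg_left hxm (hlam m hm).le
    linarith
  have hi : ∀ m ∈ Set.Ioo a b, ∀ m' ∈ Set.Ioo a b, v m' ≤ v m + lam m * (m' - m) := by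
    intro m hm m' hm'
    have h1 := hmax m hm (xbar m') (hxnn m' hm')
    rw [hbud m hm, hbud m' hm'] at h1
    rw [hvx m hm, hvx m' hm']
    linarith
  refine ⟨hi, ?_⟩
  intro m₀ hm₀ hc
  rw [hasDerivAt_iff_isLittleO, Asymptotics.isLittleO_iff]
  intro c hcpos
  filter_upwards [isOpen_Ioo.mem_nhds hm₀, Metric.continuousAt_iff'.mp hc c hcpos] with m hm hd
  have h1 := hi m₀ hm₀ m hm
  have h2 := hi m hm m₀ hm₀
  rw [Real.dist_eq] at hd
  have h3 : |lam m - lam m₀| * |m - m₀| ≤ c * |m - m₀| :=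
    mul_le_mul_of_nonneg_right hd.le (abs_nonneg _)
  rw [← abs_mul] at h3
  have h4 := neg_abs_le ((lam m - lam m₀) * (m - m₀))
  have h5 : 0 ≤ c * |m - m₀| := by positivity
  simp only [Real.norm_eq_abs, smul_eq_mul]
  rw [abs_le]
  constructor <;> nlinarith
end
end

section
/- Let u : (Fin K → ℝ) → ℝ be a utility function and p ∈ ℝ^K with p_k > 0 for all k. Suppose λ : (0,∞) → (0,∞) and x̄ : (0,∞) → ℝ^K are such that for every m > 0, x̄(m) ≥ 0 maximizes x ↦ u(x) − λ(m)·⟨p,x⟩ over the nonnegative orthant and ⟨p,x̄(m)⟩ = m. Then λ is strictly antitone: m < m' implies λ(m) > λ(m'). (Lemma 1: the marginal utility of income is strictly positive and strictly decreasing in income.) -/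
noncomputable section

/-- Lemma 1: the marginal utility of income is strictly decreasing in income. -/
theorem multiplier_strict_antitone {K : ℕ}
    (u : (Fin K → ℝ) → ℝ) (hu : IsUtility u)
    (p : Fin K → ℝ) (hp : ∀ k, 0 < p k)
    (lam : ℝ → ℝ) (xbar : ℝ → Fin K → ℝ)
    (hlam : ∀ m, 0 < m → 0 < lam m)
    (hxnn : ∀ m, 0 < m → ∀ k, 0 ≤ xbar m k)
    (hmax : ∀ m, 0 < m → ∀ x : Fin K → ℝ, (∀ k, 0 ≤ x k) →
      u x - lam m * dot p x ≤ u (xbar m) - lam m * dot p (xbar m))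
    (hbud : ∀ m, 0 < m → dot p (xbar m) = m) :
    ∀ m m' : ℝ, 0 < m → m < m' → lam m' < lam m := by
  intro m m' hm hmm
  have hm' : 0 < m' := hm.trans hmm
  have hne : xbar m ≠ xbar m' := by
    intro h
    have h1 := hbud m hm
    rw [h, hbud m' hm'] at h1
    linarith
  have hc := hu.strictConcaveOn.2 (hxnn m hm) (hxnn m' hm') hne
    (show (0:ℝ) < 1/2 by norm_num) (show (0:ℝ) < 1/2 by norm_num) (by norm_num)
  have hz : ∀ k, 0 ≤ ((1/2:ℝ) • xbar m + (1/2:ℝ) • xbar m') k := by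
    intro k
    have h1 := hxnn m hm k
    have h2 := hxnn m' hm' k
    simp only [Pi.add_apply, Pi.smul_apply, smul_eq_mul]
    linarith
  have hd : dot p ((1/2:ℝ) • xbar m + (1/2:ℝ) • xbar m') = (m + m') / 2 := by
    have e : dot p ((1/2:ℝ) • xbar m + (1/2:ℝ) • xbar m')
        = 1/2 * dot p (xbar m) + 1/2 * dot p (xbar m') := by
      simp only [dot, Finset.mul_sum, ← Finset.sum_add_distrib, Pi.add_apply, Pi.smul_apply,
        smul_eq_mul]
      exact Finset.sum_congr rfl fun k _ => by ring
    rw [e, hbud m hm, hbud m' hm']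
    ring
  have h1 := hmax m hm _ hz
  have h2 := hmax m' hm' _ hz
  rw [hd, hbud m hm] at h1
  rw [hd, hbud m' hm'] at h2
  simp only [smul_eq_mul] at hc
  by_contra hcon
  push Not at hcon
  nlinarith [mul_nonneg (sub_nonneg.2 hcon) (sub_pos.2 hmm).le]
end
end

section
/- Let u : (Fin K → ℝ) → ℝ be a utility function with Fenchel dual v̄, let p₀ ∈ ℝ^K with p₀,k > 0 for all k, and suppose the supremum defining v̄(p₀) is attained at x̄₀ ≥ 0. Then: (i) −x̄₀ is a subgradient of the convex function v̄ at p₀, i.e. v̄(q) ≥ v̄(p₀) − ⟨x̄₀, q − p₀⟩ for every q ∈ ℝ^K for which the defining supremum is finite; and (ii) if moreover there is a neighborhood S of p₀ such that for every q ∈ S the supremum defining v̄(q) is attained at a unique point x̄(q) and the map q ↦ x̄(q) is continuous at p₀, then v̄ has gradient −x̄₀ at p₀. (The simplified Roy's identity x̄(p) = −∇v̄(p).) -/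
noncomputable section

theorem fenchelDual_eq_of_attain {K : ℕ} (u : (Fin K → ℝ) → ℝ) (q z : Fin K → ℝ)
    (hz : ∀ k, 0 ≤ z k)
    (h : ∀ x : Fin K → ℝ, (∀ k, 0 ≤ x k) → u x - dot q x ≤ u z - dot q z) :
    fenchelDual u q = u z - dot q z := by
  apply IsGreatest.csSup_eq
  refine ⟨⟨z, hz, rfl⟩, ?_⟩
  rintro _ ⟨x, hx, rfl⟩
  exact h x hx

theorem dot_sub_swap {K : ℕ} (x q p : Fin K → ℝ) :
    dot x (fun k => q k - p k) = dot q x - dot p x := by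
  unfold dot
  rw [← Finset.sum_sub_distrib]
  exact Finset.sum_congr rfl fun k _ => by ring

/-- Simplified Roy's identity: `−x̄₀` is a subgradient of `v̄` at `p₀`, and under
unique, continuous attainment the Fenchel dual has gradient `−x̄₀` at `p₀`. -/
theorem roys_identity {K : ℕ} (u : (Fin K → ℝ) → ℝ) (hu : IsUtility u)
    (p0 : Fin K → ℝ) (hp0 : ∀ k, 0 < p0 k)
    (xbar0 : Fin K → ℝ) (hxbar0 : ∀ k, 0 ≤ xbar0 k)
    (hattain : ∀ x : Fin K → ℝ, (∀ k, 0 ≤ x k) →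
      u x - dot p0 x ≤ u xbar0 - dot p0 xbar0) :
    (∀ q : Fin K → ℝ,
      BddAbove ((fun x => u x - dot q x) '' {x : Fin K → ℝ | ∀ k, 0 ≤ x k}) →
      fenchelDual u p0 - dot xbar0 (fun k => q k - p0 k) ≤ fenchelDual u q) ∧
    (∀ S : Set (Fin K → ℝ), S ∈ nhds p0 →
      ∀ xb : (Fin K → ℝ) → (Fin K → ℝ),
      (∀ q ∈ S, (∀ k, 0 ≤ xb q k) ∧
        (∀ x : Fin K → ℝ, (∀ k, 0 ≤ x k) → u x - dot q x ≤ u (xb q) - dot q (xb q)) ∧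
        (∀ z : Fin K → ℝ, (∀ k, 0 ≤ z k) →
          (∀ x : Fin K → ℝ, (∀ k, 0 ≤ x k) → u x - dot q x ≤ u z - dot q z) →
          z = xb q)) →
      ContinuousAt xb p0 →
      HasFDerivAt (fenchelDual u)
        (∑ k, (-(xbar0 k)) • (ContinuousLinearMap.proj k : (Fin K → ℝ) →L[ℝ] ℝ)) p0) := by
  have h0 := fenchelDual_eq_of_attain u p0 xbar0 hxbar0 hattain
  have key : ∀ q : Fin K → ℝ,
      BddAbove ((fun x => u x - dot q x) '' {x : Fin K → ℝ | ∀ k, 0 ≤ x k}) →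
      fenchelDual u p0 - dot xbar0 (fun k => q k - p0 k) ≤ fenchelDual u q := by
    intro q hq
    have h1 : u xbar0 - dot q xbar0 ≤ fenchelDual u q := le_csSup hq ⟨xbar0, hxbar0, rfl⟩
    rw [h0, dot_sub_swap]
    linarith
  refine ⟨key, ?_⟩
  intro S hS xb hxb hc
  have hx0 : xbar0 = xb p0 := (hxb p0 (mem_of_mem_nhds hS)).2.2 xbar0 hxbar0 hattain
  rw [hasFDerivAt_iff_isLittleO, Asymptotics.isLittleO_iff]
  intro c hc0
  have hK : (0 : ℝ) < (K : ℝ) + 1 := by positivity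
  have hnear : ∀ᶠ q in nhds p0, dist (xb q) (xb p0) < c / (K + 1) :=
    Metric.tendsto_nhds.1 hc _ (div_pos hc0 hK)
  filter_upwards [hS, hnear] with q hqS hqn
  obtain ⟨hq0, hqa, -⟩ := hxb q hqS
  have hq := fenchelDual_eq_of_attain u q (xb q) hq0 hqa
  have hlow := key q ⟨u (xb q) - dot q (xb q), by
    rintro _ ⟨x, hx, rfl⟩
    exact hqa x hx⟩
  have hup := hattain (xb q) hq0
  have hL : (∑ k, (-(xbar0 k)) • (ContinuousLinearMap.proj k : (Fin K → ℝ) →L[ℝ] ℝ)) (q - p0)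
      = - dot xbar0 (fun k => q k - p0 k) := by
    simp [dot]
  have hd : dot xbar0 (fun k => q k - p0 k) - dot (xb q) (fun k => q k - p0 k)
      ≤ c * ‖q - p0‖ := by
    unfold dot
    rw [← Finset.sum_sub_distrib]
    calc ∑ k, (xbar0 k * (q k - p0 k) - xb q k * (q k - p0 k))
        ≤ ∑ _k : Fin K, c / (K + 1) * ‖q - p0‖ := by
          apply Finset.sum_le_sum
          intro k _
          have e1 : |xbar0 k - xb q k| ≤ c / (K + 1) := by
            rw [hx0, abs_sub_comm]
            exact (dist_le_pi_dist (xb q) (xb p0) k).trans hqn.le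
          have e2 : |q k - p0 k| ≤ ‖q - p0‖ := norm_le_pi_norm (q - p0) k
          calc _ = (xbar0 k - xb q k) * (q k - p0 k) := by ring
            _ ≤ |xbar0 k - xb q k| * |q k - p0 k| := by
              rw [← abs_mul]; exact le_abs_self _
            _ ≤ _ := mul_le_mul e1 e2 (abs_nonneg _) (by positivity)
      _ = (K / (K + 1)) * (c * ‖q - p0‖) := by
          simp only [Finset.sum_const, Finset.card_univ, Fintype.card_fin, nsmul_eq_mul]
          ring
      _ ≤ 1 * (c * ‖q - p0‖) := by
          apply mul_le_mul_of_nonneg_right _ (by positivity)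
          rw [div_le_one hK]; linarith
      _ = c * ‖q - p0‖ := one_mul _
  rw [hL, Real.norm_eq_abs, abs_of_nonneg (by linarith)]
  rw [dot_sub_swap (xb q)] at hd
  linarith
end
end

section
/- Let u : (Fin K → ℝ) → ℝ be a utility function that is in addition differentiable on the strictly positive orthant, with Fenchel dual v̄. Let S ⊆ ℝ^K be a convex set of strictly positive price vectors such that for every q ∈ S the supremum defining v̄(q) is attained at some strictly positive point x̄(q). Then v̄ is strictly convex on S: for q ≠ q' in S and t ∈ (0,1), v̄(t·q + (1−t)·q') < t·v̄(q) + (1−t)·v̄(q'). (The dual function of a differentiable strictly concave utility is strictly convex in prices.) -/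
noncomputable section

theorem aux_fderiv {K : ℕ} (u : (Fin K → ℝ) → ℝ) (q z : Fin K → ℝ) (hz : ∀ k, 0 < z k)
    (hd : DifferentiableAt ℝ u z)
    (hmax : ∀ x : Fin K → ℝ, (∀ k, 0 ≤ x k) → u x - dot q x ≤ u z - dot q z) (k : Fin K) :
    fderiv ℝ u z (Pi.single k 1) = q k := by
  have h1 : HasFDerivAt (fun x : Fin K → ℝ => dot q x)
      (∑ k, q k • (ContinuousLinearMap.proj k : (Fin K → ℝ) →L[ℝ] ℝ)) z := by
    unfold dot
    refine HasFDerivAt.fun_sum fun i _ => ?_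
    exact (ContinuousLinearMap.proj (R := ℝ) (φ := fun _ : Fin K => ℝ) i).hasFDerivAt.const_mul (q i)
  have h2 := hd.hasFDerivAt.sub h1
  have hloc : IsLocalMax (u - fun x : Fin K → ℝ => dot q x) z := by
    have : ∀ᶠ x in nhds z, ∀ k, 0 < x k := by
      rw [Filter.eventually_all]
      intro i
      exact (continuous_apply i).continuousAt.eventually (lt_mem_nhds (hz i))
    filter_upwards [this] with x hx
    exact hmax x fun k => (hx k).le
  have h3 := hloc.hasFDerivAt_eq_zero h2
  have h4 := congrArg (fun L : (Fin K → ℝ) →L[ℝ] ℝ => L (Pi.single k 1)) h3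
  simp [Pi.single_apply] at h4
  linarith

theorem aux_le {K : ℕ} (u : (Fin K → ℝ) → ℝ) (q z : Fin K → ℝ) (hz : ∀ k, 0 < z k)
    (hmax : ∀ x : Fin K → ℝ, (∀ k, 0 ≤ x k) → u x - dot q x ≤ u z - dot q z) :
    fenchelDual u q = u z - dot q z := by
  refine IsGreatest.csSup_eq ⟨⟨z, fun k => (hz k).le, rfl⟩, ?_⟩
  rintro _ ⟨x, hx, rfl⟩
  exact hmax x hx

/-- The Fenchel dual of a differentiable strictly concave utility is strictly
convex on a convex set of strictly positive prices with interior attainment. -/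
theorem fenchelDual_strictConvexOn {K : ℕ} (u : (Fin K → ℝ) → ℝ) (hu : IsUtility u)
    (hdiff : ∀ x : Fin K → ℝ, (∀ k, 0 < x k) → DifferentiableAt ℝ u x)
    (S : Set (Fin K → ℝ)) (hconv : Convex ℝ S) (hSpos : ∀ q ∈ S, ∀ k, 0 < q k)
    (hattain : ∀ q ∈ S, ∃ z : Fin K → ℝ, (∀ k, 0 < z k) ∧
      ∀ x : Fin K → ℝ, (∀ k, 0 ≤ x k) → u x - dot q x ≤ u z - dot q z) :
    ∀ q ∈ S, ∀ q' ∈ S, q ≠ q' → ∀ t ∈ Set.Ioo (0:ℝ) 1,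
      fenchelDual u (fun k => t * q k + (1 - t) * q' k)
        < t * fenchelDual u q + (1 - t) * fenchelDual u q' := by
  intro q hq q' hq' hne t ht
  obtain ⟨ht0, ht1⟩ := ht
  have hm : (fun k => t * q k + (1 - t) * q' k) ∈ S :=
    hconv hq hq' ht0.le (sub_nonneg.2 ht1.le) (by ring)
  obtain ⟨z, hz, hzm⟩ := hattain _ hm
  obtain ⟨a, ha, ham⟩ := hattain _ hq
  obtain ⟨b, hb, hbm⟩ := hattain _ hq'
  rw [aux_le u _ z hz hzm, aux_le u q a ha ham, aux_le u q' b hb hbm]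
  have hdot : dot (fun k => t * q k + (1 - t) * q' k) z = t * dot q z + (1 - t) * dot q' z := by
    simp only [dot, Finset.mul_sum, ← Finset.sum_add_distrib]
    exact Finset.sum_congr rfl fun i _ => by ring
  rw [hdot]
  have h1 := ham z fun k => (hz k).le
  have h2 := hbm z fun k => (hz k).le
  have ht1' : 0 < 1 - t := sub_pos.2 ht1
  rcases h1.lt_or_eq with h | h
  · nlinarith [mul_lt_mul_of_pos_left h ht0, mul_le_mul_of_nonneg_left h2 ht1'.le]
  rcases h2.lt_or_eq with h' | h'
  · nlinarith [mul_le_mul_of_nonneg_left h1 ht0.le, mul_lt_mul_of_pos_left h' ht1']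
  exfalso
  apply hne
  funext k
  rw [← aux_fderiv u q z hz (hdiff z hz) (fun x hx => (ham x hx).trans h.ge) k,
    aux_fderiv u q' z hz (hdiff z hz) (fun x hx => (hbm x hx).trans h'.ge) k]
end
end

section
/- (Theorem 1, forward direction.) Consider an exchange economy with N consumers with utility functions u_i and total endowment w ∈ ℝ^K, w_k > 0 for all k. Let (x,p) be a Walrasian equilibrium with incomes m_i > 0 in which markets clear exactly (Σ_i x_i = w), p ≥ 0, ⟨p,x_i⟩ = m_i, and suppose for each i there is a multiplier λ_i > 0 such that x_i maximizes z ↦ u_i(z) − λ_i·⟨p,z⟩ over the nonnegative orthant. Then, setting α_i := 1/λ_i, the potential vanishes: Y_α(x,p,w) = 0. -/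
noncomputable section

/-- The economy's potential
`Y_α(x,p,w) = Σ_i α_i·u_i(x_i) − ⟨p,w⟩ − Σ_i α_i·v̄_i(p/α_i)`. -/
def potential {N K : ℕ} (u : Fin N → (Fin K → ℝ) → ℝ) (α : Fin N → ℝ)
    (x : Fin N → Fin K → ℝ) (p w : Fin K → ℝ) : ℝ :=
  ∑ i, α i * u i (x i) - dot p w -
    ∑ i, α i * fenchelDual (u i) (fun k => p k / α i)

/-- Theorem 1, forward direction: at a Walrasian equilibrium the potential
vanishes for the weights `α_i = 1/λ_i`. -/
theorem potential_zero_at_walrasian {N K : ℕ}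
    (u : Fin N → (Fin K → ℝ) → ℝ) (hu : ∀ i, IsUtility (u i))
    (w : Fin K → ℝ) (hw : ∀ k, 0 < w k)
    (x : Fin N → Fin K → ℝ) (p : Fin K → ℝ) (m lam : Fin N → ℝ)
    (hp : ∀ k, 0 ≤ p k) (hm : ∀ i, 0 < m i) (hlam : ∀ i, 0 < lam i)
    (hxnn : ∀ i k, 0 ≤ x i k)
    (hclear : ∀ k, ∑ i, x i k = w k)
    (hbudget : ∀ i, dot p (x i) = m i)
    (hwalras : ∀ i, ∀ z : Fin K → ℝ, (∀ k, 0 ≤ z k) → dot p z ≤ m i →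
      u i z ≤ u i (x i))
    (hmult : ∀ i, ∀ z : Fin K → ℝ, (∀ k, 0 ≤ z k) →
      u i z - lam i * dot p z ≤ u i (x i) - lam i * dot p (x i)) :
    potential u (fun i => 1 / lam i) x p w = 0 := by
  have hd : ∀ i (z : Fin K → ℝ),
      dot (fun k => p k / (1 / lam i)) z = lam i * dot p z := by
    intro i z
    unfold dot
    rw [Finset.mul_sum]
    refine Finset.sum_congr rfl fun k _ => ?_
    simp only [div_div_eq_mul_div, div_one]
    ring
  have hf : ∀ i, fenchelDual (u i) (fun k => p k / (1 / lam i))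
      = u i (x i) - lam i * dot p (x i) := by
    intro i
    unfold fenchelDual
    refine IsGreatest.csSup_eq ⟨⟨x i, hxnn i, ?_⟩, ?_⟩
    · simp only [hd]
    · rintro _ ⟨z, hz, rfl⟩
      simp only [hd]
      exact hmult i z hz
  have hw' : dot p w = ∑ i, dot p (x i) := by
    unfold dot
    rw [Finset.sum_comm]
    refine Finset.sum_congr rfl fun k _ => ?_
    rw [← hclear k, Finset.mul_sum]
  unfold potential
  simp only [hf]
  rw [hw', ← Finset.sum_sub_distrib, ← Finset.sum_sub_distrib]
  refine Finset.sum_eq_zero fun i _ => ?_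
  have := (hlam i).ne'
  field_simp
  ring
end
end

section
/- (Theorem 1, converse direction.) Consider an exchange economy with N consumers with utility functions u_i and total endowment w ∈ ℝ^K, w_k > 0 for all k. Let α ∈ ℝ^N with α_i > 0 for all i, let x be a feasible allocation (each x_i ≥ 0, Σ_i x_i ≤ w), and let p ≥ 0 be such that for each i the supremum defining v̄_i(p/α_i) is attained. If Y_α(x,p,w) = 0, then (x,p) is a Walrasian equilibrium with incomes m_i := ⟨p,x_i⟩: each x_i maximizes u_i over the budget set { z ≥ 0 : ⟨p,z⟩ ≤ ⟨p,x_i⟩ }; moreover the incomes add up to total wealth, Σ_i ⟨p,x_i⟩ = ⟨p,w⟩. -/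
noncomputable section

/-- Theorem 1, converse direction: a root of the potential is a Walrasian
equilibrium with incomes `m_i = ⟨p,x_i⟩`, and incomes add up to total wealth. -/
theorem root_of_potential_is_walrasian {N K : ℕ}
    (u : Fin N → (Fin K → ℝ) → ℝ) (hu : ∀ i, IsUtility (u i))
    (w : Fin K → ℝ) (hw : ∀ k, 0 < w k)
    (α : Fin N → ℝ) (hα : ∀ i, 0 < α i)
    (x : Fin N → Fin K → ℝ) (hx : ∀ i k, 0 ≤ x i k)
    (hfeas : ∀ k, ∑ i, x i k ≤ w k)
    (p : Fin K → ℝ) (hp : ∀ k, 0 ≤ p k)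
    (hattain : ∀ i, ∃ z : Fin K → ℝ, (∀ k, 0 ≤ z k) ∧
      ∀ y : Fin K → ℝ, (∀ k, 0 ≤ y k) →
        u i y - dot (fun k => p k / α i) y ≤ u i z - dot (fun k => p k / α i) z)
    (hY : potential u α x p w = 0) :
    (∀ i, ∀ z : Fin K → ℝ, (∀ k, 0 ≤ z k) → dot p z ≤ dot p (x i) →
      u i z ≤ u i (x i)) ∧
    ∑ i, dot p (x i) = dot p w := by
  have key : ∀ i, ∀ y : Fin K → ℝ, (∀ k, 0 ≤ y k) →
      α i * u i y - dot p y ≤ α i * fenchelDual (u i) (fun k => p k / α i) := by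
    intro i y hy
    obtain ⟨z, hz, hmax⟩ := hattain i
    have h1 : u i y - dot (fun k => p k / α i) y
        ≤ fenchelDual (u i) (fun k => p k / α i) := by
      apply le_csSup
      · refine ⟨u i z - dot (fun k => p k / α i) z, ?_⟩
        rintro _ ⟨t, ht, rfl⟩
        exact hmax t ht
      · exact ⟨y, hy, rfl⟩
    have h2 : α i * dot (fun k => p k / α i) y = dot p y := by
      unfold dot
      rw [Finset.mul_sum]
      refine Finset.sum_congr rfl fun k _ => ?_
      have := (hα i).ne'
      field_simp
    have h3 := mul_le_mul_of_nonneg_left h1 (hα i).le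
    rw [mul_sub, h2] at h3
    exact h3
  have hle : ∑ i, dot p (x i) ≤ dot p w := by
    unfold dot
    rw [Finset.sum_comm]
    refine Finset.sum_le_sum fun k _ => ?_
    rw [← Finset.mul_sum]
    exact mul_le_mul_of_nonneg_left (hfeas k) (hp k)
  unfold potential at hY
  have hnn : ∀ i ∈ Finset.univ, 0 ≤ α i * fenchelDual (u i) (fun k => p k / α i)
      - (α i * u i (x i) - dot p (x i)) := fun i _ => sub_nonneg.2 (key i (x i) (hx i))
  have hsum : ∑ i, (α i * fenchelDual (u i) (fun k => p k / α i)
      - (α i * u i (x i) - dot p (x i))) = ∑ i, dot p (x i) - dot p w := by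
    simp only [Finset.sum_sub_distrib]
    linarith
  have hge := Finset.sum_nonneg hnn
  have h0 := (Finset.sum_eq_zero_iff_of_nonneg hnn).1 (by linarith)
  refine ⟨fun i z hz hb => ?_, by linarith⟩
  have a := key i z hz
  have b := h0 i (Finset.mem_univ i)
  exact le_of_mul_le_mul_left (by linarith) (hα i)
end
end

section
/- (Theorem 1, uniqueness of the root.) Consider an exchange economy with N consumers with utility functions u_i that are in addition differentiable on the strictly positive orthant, and total endowment w ∈ ℝ^K, w_k > 0 for all k. Fix α ∈ ℝ^N with α_i > 0 for all i, and suppose that for every strictly positive price vector q the supremum defining v̄_i(q) is attained at a unique strictly positive point. If (x,p) and (x',p') both satisfy: x, x' feasible (components nonnegative, sums at most w), p and p' strictly positive, and Y_α(x,p,w) = 0 = Y_α(x',p',w), then x = x' and p = p'. (For any welfare weights the potential has at most one root, the Walrasian equilibrium.) -/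
noncomputable section

lemma fenchel_eq {K : ℕ} (u : (Fin K → ℝ) → ℝ) (q z : Fin K → ℝ) (hz : ∀ k, 0 < z k)
    (hmax : ∀ y : Fin K → ℝ, (∀ k, 0 ≤ y k) → u y - dot q y ≤ u z - dot q z) :
    fenchelDual u q = u z - dot q z := by
  have h : IsGreatest ((fun x => u x - dot q x) '' {x : Fin K → ℝ | ∀ k, 0 ≤ x k})
      (u z - dot q z) := by
    refine ⟨⟨z, fun k => (hz k).le, rfl⟩, ?_⟩
    rintro _ ⟨y, hy, rfl⟩
    exact hmax y hy
  exact h.csSup_eq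

lemma dot_div {K : ℕ} (p x : Fin K → ℝ) (a : ℝ) (ha : 0 < a) :
    a * dot (fun k => p k / a) x = dot p x := by
  unfold dot
  rw [Finset.mul_sum]
  refine Finset.sum_congr rfl fun k _ => ?_
  field_simp

lemma foc {K : ℕ} (u : (Fin K → ℝ) → ℝ) (z : Fin K → ℝ) (hz : ∀ k, 0 < z k)
    (hd : DifferentiableAt ℝ u z) (q : Fin K → ℝ)
    (hmax : ∀ y : Fin K → ℝ, (∀ k, 0 ≤ y k) → u y - dot q y ≤ u z - dot q z) (k : Fin K) :
    q k = fderiv ℝ u z (Pi.single k 1) := by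
  have hD : HasFDerivAt (fun y => dot q y)
      (∑ k, q k • (ContinuousLinearMap.proj k : (Fin K → ℝ) →L[ℝ] ℝ)) z := by
    have := (∑ k, q k • (ContinuousLinearMap.proj k : (Fin K → ℝ) →L[ℝ] ℝ)).hasFDerivAt (x := z)
    convert this using 1
    ext y
    simp [dot]
  have hf := hd.hasFDerivAt.sub hD
  have hm : IsLocalMax (u - fun y => dot q y) z := by
    have : ∀ᶠ y in nhds z, ∀ k, 0 < y k := by
      rw [Filter.eventually_all]
      intro k
      exact (continuous_apply k).continuousAt.eventually (lt_mem_nhds (hz k))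
    filter_upwards [this] with y hy
    exact hmax y fun k => (hy k).le
  have h0 := hm.hasFDerivAt_eq_zero hf
  have h1 := congrArg (fun L : (Fin K → ℝ) →L[ℝ] ℝ => L (Pi.single k 1)) h0
  simp [Pi.single_apply] at h1
  linarith

/-- Theorem 1, uniqueness: for any welfare weights the potential has at most
one root, the Walrasian equilibrium. -/
theorem potential_root_unique {N K : ℕ}
    (u : Fin N → (Fin K → ℝ) → ℝ) (hu : ∀ i, IsUtility (u i))
    (hdiff : ∀ i, ∀ x : Fin K → ℝ, (∀ k, 0 < x k) → DifferentiableAt ℝ (u i) x)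
    (w : Fin K → ℝ) (hw : ∀ k, 0 < w k)
    (α : Fin N → ℝ) (hα : ∀ i, 0 < α i)
    (hattain : ∀ i, ∀ q : Fin K → ℝ, (∀ k, 0 < q k) →
      ∃ z : Fin K → ℝ, (∀ k, 0 < z k) ∧
        (∀ y : Fin K → ℝ, (∀ k, 0 ≤ y k) → u i y - dot q y ≤ u i z - dot q z) ∧
        (∀ z' : Fin K → ℝ, (∀ k, 0 ≤ z' k) →
          (∀ y : Fin K → ℝ, (∀ k, 0 ≤ y k) → u i y - dot q y ≤ u i z' - dot q z') →
          z' = z))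
    (x x' : Fin N → Fin K → ℝ) (p p' : Fin K → ℝ)
    (hx : ∀ i k, 0 ≤ x i k) (hx' : ∀ i k, 0 ≤ x' i k)
    (hfeas : ∀ k, ∑ i, x i k ≤ w k) (hfeas' : ∀ k, ∑ i, x' i k ≤ w k)
    (hp : ∀ k, 0 < p k) (hp' : ∀ k, 0 < p' k)
    (hY : potential u α x p w = 0) (hY' : potential u α x' p' w = 0) :
    x = x' ∧ p = p' := by
  choose z hz using hattain
  -- the equality case
  have key : ∀ (q : Fin K → ℝ) (hq : ∀ k, 0 < q k) (y : Fin N → Fin K → ℝ),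
      (∀ i k, 0 ≤ y i k) → (∀ k, ∑ i, y i k ≤ w k) →
      potential u α y q w ≤ 0 ∧ (potential u α y q w = 0 →
        ∀ i, (∀ k, 0 < y i k) ∧ (∀ v : Fin K → ℝ, (∀ k, 0 ≤ v k) →
          u i v - dot (fun k => q k / α i) v ≤ u i (y i) - dot (fun k => q k / α i) (y i)) ∧
          y i = z i (fun k => q k / α i) (fun k => div_pos (hq k) (hα i))) := by
    intro q hq y hy hyw
    have hqa : ∀ i k, 0 < q k / α i := fun i k => div_pos (hq k) (hα i)
    have hF : ∀ i, fenchelDual (u i) (fun k => q k / α i) = _ := fun i =>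
      fenchel_eq (u i) _ _ (hz i _ (hqa i)).1 (hz i _ (hqa i)).2.1
    have h1 : ∀ i, α i * u i (y i) - dot q (y i) ≤
        α i * fenchelDual (u i) (fun k => q k / α i) := by
      intro i
      have := (hz i _ (hqa i)).2.1 (y i) (hy i)
      rw [← hF i] at this
      have := mul_le_mul_of_nonneg_left this (hα i).le
      rwa [mul_sub, dot_div _ _ _ (hα i)] at this
    have h2 : ∑ i, dot q (y i) ≤ dot q w := by
      unfold dot
      rw [Finset.sum_comm]
      refine Finset.sum_le_sum fun k _ => ?_
      rw [← Finset.mul_sum]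
      exact mul_le_mul_of_nonneg_left (hyw k) (hq k).le
    have h3 := Finset.sum_le_sum (s := Finset.univ) fun i _ => h1 i
    rw [Finset.sum_sub_distrib] at h3
    refine ⟨by unfold potential; linarith, fun h0 i => ?_⟩
    unfold potential at h0
    have h4 : ∑ i, (α i * u i (y i) - dot q (y i)) =
        ∑ i, α i * fenchelDual (u i) (fun k => q k / α i) := by
      rw [Finset.sum_sub_distrib]; linarith
    have h5 := (Finset.sum_eq_sum_iff_of_le fun i _ => h1 i).1 h4 i (Finset.mem_univ i)
    rw [← dot_div q (y i) _ (hα i), ← mul_sub] at h5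
    have h6 := mul_left_cancel₀ (hα i).ne' h5
    have hm : ∀ v : Fin K → ℝ, (∀ k, 0 ≤ v k) →
          u i v - dot (fun k => q k / α i) v ≤ u i (y i) - dot (fun k => q k / α i) (y i) := by
      intro v hv
      rw [h6, hF i]
      exact (hz i _ (hqa i)).2.1 v hv
    have he := (hz i _ (hqa i)).2.2 (y i) (hy i) hm
    exact ⟨fun k => by rw [he]; exact (hz i _ (hqa i)).1 k, hm, he⟩
  have a1 := (key p hp x' hx' hfeas').1
  have a2 := (key p' hp' x hx hfeas).1
  have a3 : potential u α x' p w = 0 := by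
    unfold potential at *
    linarith
  have b1 := (key p hp x hx hfeas).2 hY
  have b2 := (key p hp x' hx' hfeas').2 a3
  have b3 := (key p' hp' x' hx' hfeas').2 hY'
  have hxx : x = x' := funext fun i => (b1 i).2.2.trans (b2 i).2.2.symm
  refine ⟨hxx, ?_⟩
  funext k
  rcases Nat.eq_zero_or_pos N with h | h
  · subst h
    have : 0 < dot p w :=
      Finset.sum_pos (fun k _ => mul_pos (hp k) (hw k)) ⟨k, Finset.mem_univ k⟩
    simp [potential] at hY
    linarith
  · let i : Fin N := ⟨0, h⟩
    have c1 := foc (u i) (x' i) (b2 i).1 (hdiff i _ (b2 i).1) _ (b2 i).2.1 k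
    have c2 := foc (u i) (x' i) (b3 i).1 (hdiff i _ (b3 i).1) _ (b3 i).2.1 k
    have c3 : p k / α i = p' k / α i := c1.trans c2.symm
    exact (div_left_inj' (hα i).ne').1 c3
end
end

section
/- (Corollary 1, first welfare theorem.) Consider an exchange economy with N consumers with utility functions u_i and endowments ω_i ∈ ℝ^K with ω_{ik} > 0 for all i,k; let w := Σ_i ω_i. Let p ≥ 0, p ≠ 0, and let x be a Walrasian equilibrium allocation with incomes m_i := ⟨p,ω_i⟩: each x_i ≥ 0, Σ_i x_i ≤ w, ⟨p,x_i⟩ = m_i, and x_i maximizes u_i over { z ≥ 0 : ⟨p,z⟩ ≤ m_i }. Then x is Pareto optimal: there is no feasible allocation x' (each x'_i ≥ 0, Σ_i x'_i ≤ w) with u_i(x'_i) ≥ u_i(x_i) for all i and u_j(x'_j) > u_j(x_j) for some j. -/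
noncomputable section

/-- Corollary 1, first welfare theorem: a Walrasian equilibrium allocation is
Pareto optimal. -/
theorem first_welfare_theorem {N K : ℕ}
    (u : Fin N → (Fin K → ℝ) → ℝ) (hu : ∀ i, IsUtility (u i))
    (ω : Fin N → Fin K → ℝ) (hω : ∀ i k, 0 < ω i k)
    (w : Fin K → ℝ) (hw : w = ∑ i, ω i)
    (p : Fin K → ℝ) (hp : ∀ k, 0 ≤ p k) (hpne : p ≠ 0)
    (x : Fin N → Fin K → ℝ) (hx : ∀ i k, 0 ≤ x i k)
    (hfeas : ∀ k, ∑ i, x i k ≤ w k)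
    (hbudget : ∀ i, dot p (x i) = dot p (ω i))
    (hmax : ∀ i, ∀ z : Fin K → ℝ, (∀ k, 0 ≤ z k) → dot p z ≤ dot p (ω i) →
      u i z ≤ u i (x i)) :
    ¬ ∃ x' : Fin N → Fin K → ℝ,
      (∀ i k, 0 ≤ x' i k) ∧ (∀ k, ∑ i, x' i k ≤ w k) ∧
      (∀ i, u i (x i) ≤ u i (x' i)) ∧ (∃ j, u j (x j) < u j (x' j)) := by
  rintro ⟨x', hx', hf', hge, j, hj⟩
  obtain ⟨k₀, hk₀⟩ : ∃ k, p k ≠ 0 := Function.ne_iff.mp hpne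
  have hk₀p : 0 < p k₀ := lt_of_le_of_ne (hp k₀) (Ne.symm hk₀)
  have hS : 0 < ∑ k, p k :=
    Finset.sum_pos' (fun k _ => hp k) ⟨k₀, Finset.mem_univ _, hk₀p⟩
  have h1 : ∀ i, dot p (ω i) ≤ dot p (x' i) := by
    intro i
    by_contra hlt
    rw [not_le] at hlt
    obtain ⟨e, he⟩ : ∃ e, e = (dot p (ω i) - dot p (x' i)) / ∑ k, p k := ⟨_, rfl⟩
    have hepos : 0 < e := by
      rw [he]
      exact div_pos (sub_pos.mpr hlt) hS
    have hz : dot p (fun k => x' i k + e) = dot p (ω i) := by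
      have : dot p (fun k => x' i k + e) = dot p (x' i) + (∑ k, p k) * e := by
        simp only [dot, mul_add, Finset.sum_add_distrib, Finset.sum_mul]
      rw [this, he, mul_div_cancel₀ _ hS.ne']
      ring
    have hz0 : ∀ k, 0 ≤ x' i k + e := fun k => add_nonneg (hx' i k) hepos.le
    have h2 := hmax i (fun k => x' i k + e) hz0 hz.le
    have h3 := (hu i).strictMono (x' i) (fun k => x' i k + e) (hx' i) hz0
      (fun k => by linarith) (fun h => by
        have := congrFun h k₀
        linarith)
    linarith [hge i]
  have h2 : dot p (ω j) < dot p (x' j) := by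
    by_contra h
    exact absurd (hmax j (x' j) (hx' j) (not_lt.mp h)) (not_le.mpr hj)
  have h3 : ∑ i, dot p (ω i) < ∑ i, dot p (x' i) :=
    Finset.sum_lt_sum (fun i _ => h1 i) ⟨j, Finset.mem_univ _, h2⟩
  have hswap : ∀ y : Fin N → Fin K → ℝ, ∑ i, dot p (y i) = ∑ k, p k * ∑ i, y i k := by
    intro y
    simp only [dot, Finset.mul_sum]
    exact Finset.sum_comm
  rw [hswap, hswap] at h3
  refine absurd h3 (not_lt.mpr (Finset.sum_le_sum fun k _ => ?_))
  have h4 := hf' k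
  rw [hw, Finset.sum_apply] at h4
  exact mul_le_mul_of_nonneg_left h4 (hp k)
end
end

section
/- (Corollary 2: the Walrasian price is the gradient of utilitarian social welfare.) Consider an exchange economy with N consumers with utility functions u_i. Let α_i > 0, let w ∈ ℝ^K with w_k > 0 for all k, let x be feasible for w (each x_i ≥ 0, Σ_i x_i ≤ w), let p ≥ 0 be such that for each i the supremum defining v̄_i(p/α_i) is attained, and suppose Y_α(x,p,w) = 0. Define W_α(w') := sup { Σ_i α_i·u_i(x'_i) : x' feasible for w' } for w' ≥ 0. Then: (i) W_α(w) = Σ_i α_i·u_i(x_i); (ii) p is a supergradient of the concave function W_α at w: W_α(w') ≤ W_α(w) + ⟨p, w' − w⟩ for every w' ≥ 0; and (iii) if W_α has a gradient g at w, then g = p. -/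
noncomputable section

/-- Corollary 2: the Walrasian price is a supergradient (and, where it exists,
the gradient) of utilitarian social welfare `W_α` at the total endowment `w`. -/
theorem walrasian_price_is_gradient_of_welfare {N K : ℕ}
    (u : Fin N → (Fin K → ℝ) → ℝ) (hu : ∀ i, IsUtility (u i))
    (α : Fin N → ℝ) (hα : ∀ i, 0 < α i)
    (w : Fin K → ℝ) (hw : ∀ k, 0 < w k)
    (x : Fin N → Fin K → ℝ) (hx : ∀ i k, 0 ≤ x i k)
    (hfeas : ∀ k, ∑ i, x i k ≤ w k)
    (p : Fin K → ℝ) (hp : ∀ k, 0 ≤ p k)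
    (hattain : ∀ i, ∃ z : Fin K → ℝ, (∀ k, 0 ≤ z k) ∧
      ∀ y : Fin K → ℝ, (∀ k, 0 ≤ y k) →
        u i y - dot (fun k => p k / α i) y ≤ u i z - dot (fun k => p k / α i) z)
    (hY : potential u α x p w = 0)
    (W : (Fin K → ℝ) → ℝ)
    (hW : ∀ w' : Fin K → ℝ,
      W w' = sSup ((fun x' : Fin N → Fin K → ℝ => ∑ i, α i * u i (x' i)) ''
        {x' : Fin N → Fin K → ℝ | (∀ i k, 0 ≤ x' i k) ∧ ∀ k, ∑ i, x' i k ≤ w' k})) :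
    W w = ∑ i, α i * u i (x i) ∧
    (∀ w' : Fin K → ℝ, (∀ k, 0 ≤ w' k) →
      W w' ≤ W w + dot p (fun k => w' k - w k)) ∧
    (∀ g : Fin K → ℝ,
      HasFDerivAt W (∑ k, g k • (ContinuousLinearMap.proj k : (Fin K → ℝ) →L[ℝ] ℝ)) w →
      g = p) := by
  have hv : ∀ i (y : Fin K → ℝ), (∀ k, 0 ≤ y k) →
      α i * u i y ≤ dot p y + α i * fenchelDual (u i) (fun k => p k / α i) := by
    intro i y hy
    obtain ⟨z, hz, hzmax⟩ := hattain i
    have h1 : u i y - dot (fun k => p k / α i) y ≤ fenchelDual (u i) (fun k => p k / α i) := by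
      apply le_csSup
      · refine ⟨u i z - dot (fun k => p k / α i) z, ?_⟩
        rintro _ ⟨y', hy', rfl⟩
        exact hzmax y' hy'
      · exact ⟨y, hy, rfl⟩
    have h2 : α i * dot (fun k => p k / α i) y = dot p y := by
      unfold dot
      rw [Finset.mul_sum]
      refine Finset.sum_congr rfl fun k _ => ?_
      have := (hα i).ne'
      field_simp
    have h3 := mul_le_mul_of_nonneg_left h1 (hα i).le
    rw [mul_sub, h2] at h3
    linarith
  have key : ∀ (w' : Fin K → ℝ) (x' : Fin N → Fin K → ℝ), (∀ i k, 0 ≤ x' i k) →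
      (∀ k, ∑ i, x' i k ≤ w' k) →
      ∑ i, α i * u i (x' i) ≤ ∑ i, α i * u i (x i) + dot p (fun k => w' k - w k) := by
    intro w' x' hx' hf
    have h1 : ∑ i, α i * u i (x' i) ≤
        ∑ i, (dot p (x' i) + α i * fenchelDual (u i) (fun k => p k / α i)) :=
      Finset.sum_le_sum fun i _ => hv i (x' i) (hx' i)
    rw [Finset.sum_add_distrib] at h1
    have h2 : ∑ i, dot p (x' i) ≤ dot p w' := by
      unfold dot
      rw [Finset.sum_comm]
      refine Finset.sum_le_sum fun k _ => ?_
      rw [← Finset.mul_sum]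
      exact mul_le_mul_of_nonneg_left (hf k) (hp k)
    have h3 : dot p (fun k => w' k - w k) = dot p w' - dot p w := by
      simp [dot, mul_sub]
    unfold potential at hY
    linarith
  have hself : dot p (fun k => w k - w k) = 0 := by simp [dot]
  have h1 : W w = ∑ i, α i * u i (x i) := by
    rw [hW]
    apply IsGreatest.csSup_eq
    refine ⟨⟨x, ⟨hx, hfeas⟩, rfl⟩, ?_⟩
    rintro _ ⟨x', ⟨hx', hf⟩, rfl⟩
    have := key w x' hx' hf
    rw [hself, add_zero] at this
    exact this
  have h2 : ∀ w' : Fin K → ℝ, (∀ k, 0 ≤ w' k) →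
      W w' ≤ W w + dot p (fun k => w' k - w k) := by
    intro w' hw'
    rw [hW w', h1]
    apply csSup_le
    · refine ⟨_, ⟨fun _ _ => 0, ⟨fun _ _ => le_rfl, fun k => ?_⟩, rfl⟩⟩
      simpa using hw' k
    · rintro _ ⟨x', ⟨hx', hf⟩, rfl⟩
      exact key w' x' hx' hf
  refine ⟨h1, h2, fun g hg => ?_⟩
  have hL : HasFDerivAt (fun w' : Fin K → ℝ =>
      (∑ k, p k • (ContinuousLinearMap.proj k : (Fin K → ℝ) →L[ℝ] ℝ)) w')
      (∑ k, p k • (ContinuousLinearMap.proj k : (Fin K → ℝ) →L[ℝ] ℝ)) w :=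
    ContinuousLinearMap.hasFDerivAt _
  have hmax : IsLocalMax (fun w' => W w' -
      (∑ k, p k • (ContinuousLinearMap.proj k : (Fin K → ℝ) →L[ℝ] ℝ)) w') w := by
    have hev : ∀ᶠ w' in nhds w, ∀ k, 0 < w' k := by
      rw [Filter.eventually_all]
      intro k
      exact (continuous_apply k).continuousAt.eventually (lt_mem_nhds (hw k))
    filter_upwards [hev] with w' hw'
    have h3 := h2 w' fun k => (hw' k).le
    have h4 : dot p (fun k => w' k - w k) = ∑ k, p k * w' k - ∑ k, p k * w k := by
      simp [dot, mul_sub]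
    simp only [ContinuousLinearMap.sum_apply, ContinuousLinearMap.smul_apply,
      ContinuousLinearMap.proj_apply, smul_eq_mul]
    linarith
  have h0 := hmax.hasFDerivAt_eq_zero (hg.sub hL)
  funext k
  have h5 := congrArg (fun L : (Fin K → ℝ) →L[ℝ] ℝ => L (Pi.single k 1)) h0
  simp [ContinuousLinearMap.sum_apply, Pi.single_apply] at h5
  linarith
end
end

section
/- (Equation (13): marginal rates of substitution are equalized at Walrasian prices.) Let u : (Fin K → ℝ) → ℝ be a utility function that is differentiable at a point x̄ with x̄_k > 0 for all k, let p ∈ ℝ^K with p_k > 0 for all k, set m := ⟨p,x̄⟩ > 0, and suppose x̄ maximizes u over the budget set { z ≥ 0 : ⟨p,z⟩ ≤ m }. Then there exists λ > 0 such that the gradient of u at x̄ equals λ·p. Consequently, if two consumers i and j with such utility functions u_i, u_j hold interior Walrasian bundles x̄_i, x̄_j at the same prices p, then for all goods k, ℓ: ∂_k u_i(x̄_i) · ∂_ℓ u_j(x̄_j) = ∂_ℓ u_i(x̄_i) · ∂_k u_j(x̄_j). -/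
noncomputable section

theorem aux_gradient {K : ℕ} (u : (Fin K → ℝ) → ℝ) (hu : IsUtility u)
    (p : Fin K → ℝ) (hp : ∀ k, 0 < p k)
    (x : Fin K → ℝ) (hx : ∀ k, 0 < x k)
    (hd : DifferentiableAt ℝ u x)
    (hmax : ∀ z : Fin K → ℝ, (∀ k, 0 ≤ z k) → dot p z ≤ dot p x → u z ≤ u x) :
    ∃ lam : ℝ, 0 < lam ∧ ∀ k, fderiv ℝ u x (Pi.single k 1) = lam * p k := by
  have hline : ∀ d : Fin K → ℝ, HasDerivAt (fun t : ℝ => u (x + t • d)) (fderiv ℝ u x d) 0 := by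
    intro d
    have h1 : HasDerivAt (fun t : ℝ => x + t • d) d 0 := by
      simpa using ((hasDerivAt_id (0:ℝ)).smul_const d).const_add x
    have h2 : HasFDerivAt u (fderiv ℝ u x) (x + (0:ℝ) • d) := by
      simpa using hd.hasFDerivAt
    exact h2.comp_hasDerivAt 0 h1
  have hzero : ∀ d : Fin K → ℝ, dot p d = 0 → fderiv ℝ u x d = 0 := by
    intro d hpd
    refine IsLocalMax.hasDerivAt_eq_zero ?_ (hline d)
    have hev : ∀ᶠ t : ℝ in nhds 0, ∀ k, 0 < x k + t * d k := by
      rw [Filter.eventually_all]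
      intro k
      have hc : ContinuousAt (fun t : ℝ => x k + t * d k) 0 := by fun_prop
      exact hc.eventually (lt_mem_nhds (by simpa using hx k))
    filter_upwards [hev] with t ht
    simp only [zero_smul, add_zero]
    refine hmax _ (fun k => by simpa using (ht k).le) ?_
    have : dot p (x + t • d) = dot p x + t * dot p d := by
      simp only [dot, Pi.add_apply, Pi.smul_apply, smul_eq_mul, Finset.mul_sum,
        ← Finset.sum_add_distrib]
      exact Finset.sum_congr rfl fun k _ => by ring
    rw [this, hpd]; simp
  have hpos : ∀ k, 0 < fderiv ℝ u x (Pi.single k 1) := by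
    intro k
    set d : Fin K → ℝ := Pi.single k 1 with hdd
    have hd0 : ∀ j, 0 ≤ d j := fun j => by
      rw [hdd, Pi.single_apply]; split_ifs <;> norm_num
    have hlt : u x < u (x + d) := by
      refine hu.strictMono _ _ (fun j => (hx j).le)
        (fun j => add_nonneg (hx j).le (hd0 j)) (fun j => by simpa using hd0 j) ?_
      intro h
      have := congrFun h k
      simp [hdd] at this
    have hconc : ConcaveOn ℝ (Set.Icc (0:ℝ) 1) (fun t : ℝ => u (x + t • d)) := by
      refine ⟨convex_Icc 0 1, ?_⟩
      intro s hs t ht a b ha hb hab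
      have := hu.strictConcaveOn.concaveOn.2
        (show x + s • d ∈ {x : Fin K → ℝ | ∀ k, 0 ≤ x k} from
          fun j => add_nonneg (hx j).le (mul_nonneg hs.1 (hd0 j)))
        (show x + t • d ∈ {x : Fin K → ℝ | ∀ k, 0 ≤ x k} from
          fun j => add_nonneg (hx j).le (mul_nonneg ht.1 (hd0 j))) ha hb hab
      convert this using 2
      ext j
      simp only [Pi.add_apply, Pi.smul_apply, smul_eq_mul]
      linear_combination (-x j) * hab
    have h := hconc.slope_le_of_hasDerivAt (by simp) (by simp) zero_lt_one (hline d)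
    simp only [slope_def_field, zero_smul, one_smul, add_zero, sub_zero, div_one] at h
    linarith
  have hcross : ∀ k l, fderiv ℝ u x (Pi.single k 1) * p l
      = fderiv ℝ u x (Pi.single l 1) * p k := by
    intro k l
    have h := hzero (p l • Pi.single k 1 - p k • Pi.single l 1) (by
      simp [dot, mul_sub, Finset.sum_sub_distrib, Pi.single_apply]; ring)
    simp only [map_sub, map_smul, smul_eq_mul] at h
    linarith
  by_cases hK : Nonempty (Fin K)
  · obtain ⟨l⟩ := hK
    refine ⟨fderiv ℝ u x (Pi.single l 1) / p l, div_pos (hpos l) (hp l), fun k => ?_⟩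
    have := hcross k l
    have := (hp l).ne'
    field_simp
    linarith
  · exact ⟨1, one_pos, fun k => (hK ⟨k⟩).elim⟩

/-- Equation (13): at an interior Walrasian bundle the gradient of utility is
proportional to prices, so marginal rates of substitution are equalized across
consumers. -/
theorem marginal_rates_of_substitution_equalized {K : ℕ}
    (ui uj : (Fin K → ℝ) → ℝ) (hui : IsUtility ui) (huj : IsUtility uj)
    (p : Fin K → ℝ) (hp : ∀ k, 0 < p k)
    (xi xj : Fin K → ℝ) (hxi : ∀ k, 0 < xi k) (hxj : ∀ k, 0 < xj k)
    (hdi : DifferentiableAt ℝ ui xi) (hdj : DifferentiableAt ℝ uj xj)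
    (hmaxi : ∀ z : Fin K → ℝ, (∀ k, 0 ≤ z k) → dot p z ≤ dot p xi → ui z ≤ ui xi)
    (hmaxj : ∀ z : Fin K → ℝ, (∀ k, 0 ≤ z k) → dot p z ≤ dot p xj → uj z ≤ uj xj) :
    (∃ lam : ℝ, 0 < lam ∧ ∀ k, fderiv ℝ ui xi (Pi.single k 1) = lam * p k) ∧
    (∃ lam : ℝ, 0 < lam ∧ ∀ k, fderiv ℝ uj xj (Pi.single k 1) = lam * p k) ∧
    ∀ k l : Fin K,
      fderiv ℝ ui xi (Pi.single k 1) * fderiv ℝ uj xj (Pi.single l 1)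
        = fderiv ℝ ui xi (Pi.single l 1) * fderiv ℝ uj xj (Pi.single k 1) := by
  obtain ⟨a, ha, hA⟩ := aux_gradient ui hui p hp xi hxi hdi hmaxi
  obtain ⟨b, hb, hB⟩ := aux_gradient uj huj p hp xj hxj hdj hmaxj
  refine ⟨⟨a, ha, hA⟩, ⟨b, hb, hB⟩, fun k l => ?_⟩
  rw [hA, hA, hB, hB]
  ring
end
end

section
/- (Example 2: linear-utility economy.) Consider two consumers with u₁(x,y) = log(2x + y) and u₂(x,y) = log(x + 2y) and total endowment w = (1,1). For α ∈ (0,1) define the allocation x₁(α) := (3α, 0) if α ≤ 1/3, (1,0) if 1/3 ≤ α ≤ 2/3, and (1, 3α−2) if α ≥ 2/3; x₂(α) := (1,1) − x₁(α); and the price vector p(α) := (1/3, 2/3) if α ≤ 1/3, (α, 1−α) if 1/3 ≤ α ≤ 2/3, and (2/3, 1/3) if α ≥ 2/3. Then: (i) (x₁(α), x₂(α)) maximizes α·u₁(z₁) + (1−α)·u₂(z₂) over all pairs of nonnegative bundles with z₁ + z₂ ≤ (1,1) componentwise (restricted to bundles where the arguments of the logarithms are positive); and (ii) for each i, x_i(α)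 maximizes u_i over the budget set { z ≥ 0 : ⟨p(α),z⟩ ≤ ⟨p(α), x_i(α)⟩ }, so (x(α), p(α)) is a Walrasian equilibrium with incomes ⟨p(α), x_i(α)⟩. -/
noncomputable section

/-- Inner product on `ℝ²`. -/
def dot2 (p x : ℝ × ℝ) : ℝ := p.1 * x.1 + p.2 * x.2

theorem key_log (t k a b : ℝ) (ht : 0 < t) (ha : 0 < a) (hb : 0 < b) (h : t = k * b) :
    t * Real.log a ≤ t * Real.log b + k * (a - b) := by
  have h1 := Real.log_le_sub_one_of_pos (div_pos ha hb)
  rw [Real.log_div ha.ne' hb.ne'] at h1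
  have h2 := mul_le_mul_of_nonneg_left h1 ht.le
  have h3 : t * (a / b - 1) = k * (a - b) := by
    rw [h]; field_simp
  linarith

/-- Example 2: the linear-utility economy with `u₁ = log(2x+y)`,
`u₂ = log(x+2y)` and total endowment `(1,1)`. -/
theorem linear_utility_example (α : ℝ) (hα : α ∈ Set.Ioo (0:ℝ) 1)
    (u1 u2 : ℝ × ℝ → ℝ)
    (hu1 : ∀ z : ℝ × ℝ, u1 z = Real.log (2 * z.1 + z.2))
    (hu2 : ∀ z : ℝ × ℝ, u2 z = Real.log (z.1 + 2 * z.2))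
    (x1 x2 p : ℝ × ℝ)
    (hx1 : x1 = if α ≤ 1/3 then ((3 * α, 0) : ℝ × ℝ)
      else if α ≤ 2/3 then (1, 0) else (1, 3 * α - 2))
    (hx2 : x2 = (1, 1) - x1)
    (hp : p = if α ≤ 1/3 then ((1/3, 2/3) : ℝ × ℝ)
      else if α ≤ 2/3 then (α, 1 - α) else (2/3, 1/3)) :
    (∀ z1 z2 : ℝ × ℝ, 0 ≤ z1.1 → 0 ≤ z1.2 → 0 ≤ z2.1 → 0 ≤ z2.2 →
      z1.1 + z2.1 ≤ 1 → z1.2 + z2.2 ≤ 1 →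
      0 < 2 * z1.1 + z1.2 → 0 < z2.1 + 2 * z2.2 →
      α * u1 z1 + (1 - α) * u2 z2 ≤ α * u1 x1 + (1 - α) * u2 x2) ∧
    (∀ z : ℝ × ℝ, 0 ≤ z.1 → 0 ≤ z.2 → 0 < 2 * z.1 + z.2 →
      dot2 p z ≤ dot2 p x1 → u1 z ≤ u1 x1) ∧
    (∀ z : ℝ × ℝ, 0 ≤ z.1 → 0 ≤ z.2 → 0 < z.1 + 2 * z.2 →
      dot2 p z ≤ dot2 p x2 → u2 z ≤ u2 x2) := by
  obtain ⟨h0, h01⟩ := hα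
  by_cases c1 : α ≤ 1/3
  · rw [if_pos c1] at hx1 hp
    refine ⟨?_, ?_, ?_⟩
    · rintro ⟨a, b⟩ ⟨c, d⟩ h1 h2 h3 h4 h5 h6 h7 h8
      simp only [hu1, hu2] at *
      have e1 := key_log α (1/6) (2 * a + b) (6 * α) h0 h7 (by linarith) (by ring)
      have e2 := key_log (1 - α) (1/3) (c + 2 * d) (3 - 3 * α) (by linarith) h8 (by linarith) (by ring)
      have e3 : 2 * x1.1 + x1.2 = 6 * α := by rw [hx1]; ring
      have e4 : x2.1 + 2 * x2.2 = 3 - 3 * α := by rw [hx2, hx1]; simp only [Prod.fst_sub, Prod.snd_sub]; ring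
      rw [e3, e4]
      nlinarith [h1]
    · rintro ⟨a, b⟩ h1 h2 h3 h4
      simp only [hu1, hp, hx1, dot2] at *
      apply Real.log_le_log h3
      nlinarith
    · rintro ⟨a, b⟩ h1 h2 h3 h4
      simp only [hu2, hp, hx2, hx1, dot2, Prod.fst_sub, Prod.snd_sub] at *
      apply Real.log_le_log h3
      nlinarith
  rw [if_neg c1] at hx1 hp
  push Not at c1
  by_cases c2 : α ≤ 2/3
  · rw [if_pos c2] at hx1 hp
    refine ⟨?_, ?_, ?_⟩
    · rintro ⟨a, b⟩ ⟨c, d⟩ h1 h2 h3 h4 h5 h6 h7 h8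
      simp only [hu1, hu2] at *
      have e1 := key_log α (α/2) (2 * a + b) (2) h0 h7 (by linarith) (by ring)
      have e2 := key_log (1 - α) ((1-α)/2) (c + 2 * d) (2) (by linarith) h8 (by linarith) (by ring)
      have e3 : 2 * x1.1 + x1.2 = 2 := by rw [hx1]; ring
      have e4 : x2.1 + 2 * x2.2 = 2 := by rw [hx2, hx1]; simp only [Prod.fst_sub, Prod.snd_sub]; ring
      rw [e3, e4]
      nlinarith [mul_nonneg h2 (sub_nonneg.2 c2), mul_nonneg h3 (sub_nonneg.2 c1.le), mul_nonneg h0.le (sub_nonneg.2 h5), mul_nonneg (sub_nonneg.2 h01.le) (sub_nonneg.2 h6)]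
    · rintro ⟨a, b⟩ h1 h2 h3 h4
      simp only [hu1, hp, hx1, dot2] at *
      apply Real.log_le_log h3
      nlinarith
    · rintro ⟨a, b⟩ h1 h2 h3 h4
      simp only [hu2, hp, hx2, hx1, dot2, Prod.fst_sub, Prod.snd_sub] at *
      apply Real.log_le_log h3
      nlinarith
  · rw [if_neg c2] at hx1 hp
    push Not at c2
    refine ⟨?_, ?_, ?_⟩
    · rintro ⟨a, b⟩ ⟨c, d⟩ h1 h2 h3 h4 h5 h6 h7 h8
      simp only [hu1, hu2] at *
      have e1 := key_log α (1/3) (2 * a + b) (3 * α) h0 h7 (by linarith) (by ring)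
      have e2 := key_log (1 - α) (1/6) (c + 2 * d) (6 - 6 * α) (by linarith) h8 (by linarith) (by ring)
      have e3 : 2 * x1.1 + x1.2 = 3 * α := by rw [hx1]; ring
      have e4 : x2.1 + 2 * x2.2 = 6 - 6 * α := by rw [hx2, hx1]; simp only [Prod.fst_sub, Prod.snd_sub]; ring
      rw [e3, e4]
      nlinarith [h1]
    · rintro ⟨a, b⟩ h1 h2 h3 h4
      simp only [hu1, hp, hx1, dot2] at *
      apply Real.log_le_log h3
      nlinarith
    · rintro ⟨a, b⟩ h1 h2 h3 h4
      simp only [hu2, hp, hx2, hx1, dot2, Prod.fst_sub, Prod.snd_sub] at *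
      apply Real.log_le_log h3
      nlinarith
end
end

section
/- (Example 4: an equilibrium of the multi-equilibrium economy.) Consider two consumers with u₁(x,y) = (3/2)·x^{2/3} − (1/2)·y^{−2} and u₂(x,y) = (3/2)·y^{2/3} − (1/2)·x^{−2}, defined for strictly positive bundles, with endowments ω₁ = (11/6, 1/6) and ω₂ = (1/6, 11/6). Then the prices p = (1/2, 1/2) and the allocation x₁ = x₂ = (1,1) form a Walrasian equilibrium: x₁ + x₂ = ω₁ + ω₂ = (2,2), ⟨p, x_i⟩ = ⟨p, ω_i⟩ = 1 for i = 1,2, and each x_i maximizes u_i over the budget set { z : z₁ > 0, z₂ > 0, ⟨p,z⟩ ≤ 1 }. -/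
noncomputable section

theorem aux_ineq (a b : ℝ) (ha : 0 < a) (hb : 0 < b) (h : a + b ≤ 2) :
    (3/2) * a ^ ((2:ℝ)/3) - (1/2) * b ^ (-2 : ℝ) ≤ 1 := by
  have h1 : a ^ ((2:ℝ)/3) ≤ 1 + (2/3) * (a - 1) := by
    have := rpow_one_add_le_one_add_mul_self (s := a - 1) (by linarith)
      (p := (2:ℝ)/3) (by norm_num) (by norm_num)
    simpa using this
  have h2 : 3 - 2 * b ≤ b ^ (-2 : ℝ) := by
    have e : b ^ (-2 : ℝ) = 1 / b ^ 2 := by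
      rw [Real.rpow_neg hb.le, one_div]
      norm_num
    rw [e, le_div_iff₀ (by positivity)]
    nlinarith [mul_nonneg (sq_nonneg (b - 1)) (by linarith : (0:ℝ) ≤ 2 * b + 1)]
  linarith

/-- Example 4: the symmetric equilibrium of the multi-equilibrium economy. -/
theorem multi_equilibrium_example (u1 u2 : ℝ × ℝ → ℝ)
    (hu1 : ∀ z : ℝ × ℝ,
      u1 z = (3/2) * z.1 ^ ((2:ℝ)/3) - (1/2) * z.2 ^ (-2 : ℝ))
    (hu2 : ∀ z : ℝ × ℝ,
      u2 z = (3/2) * z.2 ^ ((2:ℝ)/3) - (1/2) * z.1 ^ (-2 : ℝ))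
    (ω1 ω2 : ℝ × ℝ) (hω1 : ω1 = (11/6, 1/6)) (hω2 : ω2 = (1/6, 11/6))
    (p x1 x2 : ℝ × ℝ) (hp : p = (1/2, 1/2)) (hx1 : x1 = (1, 1)) (hx2 : x2 = (1, 1)) :
    x1 + x2 = ω1 + ω2 ∧ ω1 + ω2 = (2, 2) ∧
    dot2 p x1 = 1 ∧ dot2 p x2 = 1 ∧ dot2 p ω1 = 1 ∧ dot2 p ω2 = 1 ∧
    (∀ z : ℝ × ℝ, 0 < z.1 → 0 < z.2 → dot2 p z ≤ 1 → u1 z ≤ u1 x1) ∧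
    (∀ z : ℝ × ℝ, 0 < z.1 → 0 < z.2 → dot2 p z ≤ 1 → u2 z ≤ u2 x2) := by
  subst hω1 hω2 hp hx1 hx2
  refine ⟨?_, ?_, ?_, ?_, ?_, ?_, ?_, ?_⟩
  · ext <;> norm_num
  · ext <;> norm_num
  · norm_num [dot2]
  · norm_num [dot2]
  · norm_num [dot2]
  · norm_num [dot2]
  · intro z h1 h2 h
    simp only [dot2] at h
    have := aux_ineq z.1 z.2 h1 h2 (by linarith)
    rw [hu1, hu1 (1, 1)]
    simp only [Real.one_rpow]
    linarith
  · intro z h1 h2 h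
    simp only [dot2] at h
    have := aux_ineq z.2 z.1 h2 h1 (by linarith)
    rw [hu2, hu2 (1, 1)]
    simp only [Real.one_rpow]
    linarith
end
end
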